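/- arXiv:1112.0906 — 2 statements merged into one kernel-verified Lean document; each statement's English description precedes it below -/
import Mathlib

section
/- Let μ be a regular conditional distribution of X given Y, let A be a subset of the topological support of μ_Y with either A ⊆ closure(interior(A)) or μ_Y(A) = 1, and suppose y ↦ μ(U,y) is continuous on A for every Borel U ⊆ F. Then for every y ∈ A, the posterior distribution μ(·,y) is absolutely continuous with respect to the prior distribution μ_X. -/
open MeasureTheory ProbabilityTheory

/-- If `μ` is a regular conditional distribution of `X` given `Y` whose posterior probabilities
of all Borel sets are continuous on a subset `A` of the topological support of `μ_Y` with
`A ⊆ closure (interior A)` or `μ_Y A = 1`, then for every `y ∈ A` the posterior distribution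
`μ(·, y)` is absolutely continuous with respect to the prior distribution `μ_X`. -/
theorem stmt8 {Ω F G : Type*} [mΩ : MeasurableSpace Ω]
    [TopologicalSpace F] [MeasurableSpace F] [BorelSpace F] [PolishSpace F]
    [TopologicalSpace G] [MeasurableSpace G] [BorelSpace G] [PolishSpace G]
    (P : Measure Ω) [IsProbabilityMeasure P] (hP : P.IsComplete)
    (X : Ω → F) (Y : Ω → G) (hX : Measurable X) (hY : Measurable Y)
    (μ : G → Measure F)
    (hprob : ∀ y, IsProbabilityMeasure (μ y))
    (hmeas : ∀ U : Set F, MeasurableSet U →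
      AEMeasurable (fun y => (μ y U).toReal) (P.map Y))
    (hcond : ∀ U : Set F, MeasurableSet U →
      (fun ω => (μ (Y ω) U).toReal) =ᵐ[P]
        P[fun ω => Set.indicator U (fun _ => (1 : ℝ)) (X ω)|
          MeasurableSpace.comap Y inferInstance])
    (A : Set G)
    (hsupp : ∀ y ∈ A, ∀ V : Set G, IsOpen V → y ∈ V → 0 < P.map Y V)
    (hA : A ⊆ closure (interior A) ∨ P.map Y A = 1)
    (hcont : ∀ U : Set F, MeasurableSet U → ContinuousOn (fun y => (μ y U).toReal) A) :
    ∀ y ∈ A, μ y ≪ P.map X := by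
  intro y hy
  refine Measure.AbsolutelyContinuous.mk fun U hU hU0 => ?_
  have : IsProbabilityMeasure (P.map Y) := Measure.isProbabilityMeasure_map hY.aemeasurable
  rw [Measure.map_apply hX hU] at hU0
  have h1 : (fun ω => Set.indicator U (fun _ => (1 : ℝ)) (X ω)) =ᵐ[P] 0 := by
    have : ∀ᵐ ω ∂P, ω ∉ X ⁻¹' U := measure_eq_zero_iff_ae_notMem.1 hU0
    filter_upwards [this] with ω hω
    exact Set.indicator_of_notMem (s := U) (a := X ω) hω (fun _ => (1 : ℝ))
  have h2 : (fun ω => (μ (Y ω) U).toReal) =ᵐ[P] 0 := by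
    refine (hcond U hU).trans ((condExp_congr_ae h1).trans ?_)
    rw [condExp_zero]
  -- transfer to the law of `Y`
  have h3 : ∀ᵐ z ∂(P.map Y), (μ z U).toReal = 0 := by
    obtain ⟨g, hg, hge⟩ := hmeas U hU
    have h4 : ∀ᵐ ω ∂P, (μ (Y ω) U).toReal = g (Y ω) := ae_of_ae_map hY.aemeasurable hge
    have h5 : ∀ᵐ z ∂(P.map Y), g z = 0 := by
      refine (ae_map_iff hY.aemeasurable (hg (measurableSet_singleton 0))).2 ?_
      filter_upwards [h2, h4] with ω ha hb
      exact hb.symm.trans ha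
    filter_upwards [hge, h5] with z ha hb
    rw [ha, hb]
  by_contra hne
  have hpos : 0 < (μ y U).toReal := by
    have := hprob y
    exact ENNReal.toReal_pos hne (measure_ne_top _ _)
  have hev := (hcont U hU y hy).eventually (lt_mem_nhds hpos)
  obtain ⟨V, hVo, hyV, hV⟩ := mem_nhdsWithin.1 hev
  have hnull : P.map Y (A ∩ V) = 0 := by
    refine measure_mono_null ?_ (ae_iff.1 h3)
    rintro z ⟨hzA, hzV⟩
    exact ne_of_gt (hV ⟨hzV, hzA⟩)
  rcases hA with hA | hA
  · obtain ⟨z, hzV, hzA⟩ := mem_closure_iff.1 (hA hy) V hVo hyV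
    have := hsupp z (interior_subset hzA) (interior A ∩ V) (isOpen_interior.inter hVo) ⟨hzA, hzV⟩
    exact this.ne' (measure_mono_null (Set.inter_subset_inter_left _ interior_subset) hnull)
  · have hVpos := hsupp y hy V hVo hyV
    have h6 := measure_inter_add_sdiff (μ := P.map Y) A hVo.measurableSet
    rw [hnull, zero_add, hA] at h6
    have h7 : (1 : ENNReal) ≤ P.map Y Vᶜ := h6 ▸ measure_mono (fun z hz => hz.2)
    have h8 : P.map Y Vᶜ = 1 := le_antisymm prob_le_one h7
    exact hVpos.ne' ((prob_compl_eq_one_iff hVo.measurableSet).1 h8)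
end

section
/- Let F and G be complete separable metric spaces, X an F-valued and Y a G-valued random variable, and μ a regular conditional distribution of X given Y. If the family of posterior distributions {μ(·,y) : y ∈ G} is dominated by a Borel measure ν on F, then for every ε > 0 there exists a compact set K ⊆ G with μ_Y(G ∖ K) < ε such that y ↦ μ(·,y) restricted to K is continuous with respect to the weak topology of measures (and hence continuous on K for each Borel set U whose boundary satisfies μ(∂U, y) = 0 for all y ∈ K). -/
open MeasureTheory ProbabilityTheory

/-- Lusin's theorem for finite measures on Polish spaces. -/
theorem lusin_aux {G β : Type*} [TopologicalSpace G] [MeasurableSpace G] [BorelSpace G]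
    [PolishSpace G] [TopologicalSpace β] [SecondCountableTopology β] [MeasurableSpace β]
    [OpensMeasurableSpace β] (m : Measure G) [IsFiniteMeasure m] (f : G → β)
    (hf : AEMeasurable f m) (ε : ENNReal) (hε : ε ≠ 0) :
    ∃ K : Set G, IsCompact K ∧ m Kᶜ < ε ∧ ContinuousOn f K := by
  obtain ⟨N, hN, hNm, hN0⟩ := exists_measurable_superset_of_null (ae_iff.1 hf.ae_eq_mk)
  have hε2 : ε / 2 ≠ 0 := by simp [hε]
  obtain ⟨K0, hK0N, hK0c, hK0m⟩ := hNm.compl.exists_isCompact_sdiff_lt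
    (measure_ne_top m _) hε2
  let B := TopologicalSpace.countableBasis β
  have : Countable B := (TopologicalSpace.countable_countableBasis β).to_subtype
  obtain ⟨δ, hδpos, hδsum⟩ := ENNReal.exists_pos_sum_of_countable' hε2 B
  have hδ2 : ∀ V, δ V / 2 ≠ 0 := fun V => by simp [(hδpos V).ne']
  have hA : ∀ V : B, MeasurableSet (hf.mk f ⁻¹' V) := fun V =>
    hf.measurable_mk (TopologicalSpace.isOpen_of_mem_countableBasis V.2).measurableSet
  choose K1 hK1A hK1c hK1m using fun V : B =>
    (hA V).exists_isCompact_sdiff_lt (measure_ne_top m _) (hδ2 V)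
  choose K2 hK2A hK2c hK2m using fun V : B =>
    (hA V).compl.exists_isCompact_sdiff_lt (measure_ne_top m _) (hδ2 V)
  refine ⟨K0 ∩ ⋂ V, (K1 V ∪ K2 V), hK0c.inter_right
    (isClosed_iInter fun V => ((hK1c V).union (hK2c V)).isClosed), ?_, ?_⟩
  · have hsub : (K0 ∩ ⋂ V, (K1 V ∪ K2 V))ᶜ ⊆
        (N ∪ (Nᶜ \ K0)) ∪ ⋃ V : B, ((hf.mk f ⁻¹' V \ K1 V) ∪ ((hf.mk f ⁻¹' V)ᶜ \ K2 V)) := by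
      intro y hy
      by_contra hcon
      simp only [Set.mem_union, Set.mem_iUnion, Set.mem_diff, Set.mem_compl_iff, not_or,
        not_exists, not_and, not_not] at hcon
      apply hy
      refine ⟨hcon.1.2 hcon.1.1, Set.mem_iInter.2 fun V => ?_⟩
      by_cases hV : y ∈ hf.mk f ⁻¹' V
      · exact Or.inl ((hcon.2 V).1 hV)
      · exact Or.inr ((hcon.2 V).2 hV)
    calc m (K0 ∩ ⋂ V, (K1 V ∪ K2 V))ᶜ
        ≤ (m N + m (Nᶜ \ K0)) +
          ∑' V : B, m ((hf.mk f ⁻¹' V \ K1 V) ∪ ((hf.mk f ⁻¹' V)ᶜ \ K2 V)) :=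
          (measure_mono hsub).trans ((measure_union_le _ _).trans
            (add_le_add (measure_union_le _ _) (measure_iUnion_le _)))
      _ ≤ m (Nᶜ \ K0) + ∑' V : B, δ V := by
          rw [hN0, zero_add]
          gcongr with V
          refine (measure_union_le _ _).trans ?_
          rw [← ENNReal.add_halves (δ V)]
          exact add_le_add (hK1m V).le (hK2m V).le
      _ < ε / 2 + ε / 2 := ENNReal.add_lt_add hK0m hδsum
      _ = ε := ENNReal.add_halves ε
  · have hmk : ContinuousOn (hf.mk f) (K0 ∩ ⋂ V, (K1 V ∪ K2 V)) := by
      intro y hy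
      rw [ContinuousWithinAt,
        (TopologicalSpace.isBasis_countableBasis β).nhds_hasBasis.tendsto_right_iff]
      rintro V ⟨hVB, hyV⟩
      have hy2 : y ∈ (K2 ⟨V, hVB⟩)ᶜ := fun h => hK2A ⟨V, hVB⟩ h hyV
      filter_upwards [self_mem_nhdsWithin,
        mem_nhdsWithin_of_mem_nhds ((hK2c ⟨V, hVB⟩).isClosed.isOpen_compl.mem_nhds hy2)]
        with z hz hz2
      rcases Set.mem_iInter.1 hz.2 ⟨V, hVB⟩ with h | h
      · exact hK1A _ h
      · exact absurd h hz2
    refine hmk.congr fun y hy => ?_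
    by_contra hne
    exact hK0N hy.1 (hN hne)

/-- Lusin-type continuity of dominated posteriors: on Polish spaces, if the family of posterior
distributions `{μ(·,y)}` of `X` given `Y` is dominated by a Borel measure `ν` on `F`, then for
every `ε > 0` there is a compact `K ⊆ G` with `μ_Y (G \ K) < ε` on which `y ↦ μ(·,y)` is
continuous in the weak topology of measures; hence `y ↦ μ(U,y)` is continuous on `K` for every
Borel `U` whose boundary satisfies `μ(∂U, y) = 0` for all `y ∈ K`. -/
theorem stmt9 {Ω F G : Type*} [mΩ : MeasurableSpace Ω]
    [TopologicalSpace F] [MeasurableSpace F] [BorelSpace F] [PolishSpace F]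
    [TopologicalSpace G] [MeasurableSpace G] [BorelSpace G] [PolishSpace G]
    (P : Measure Ω) [IsProbabilityMeasure P] (hP : P.IsComplete)
    (X : Ω → F) (Y : Ω → G) (hX : Measurable X) (hY : Measurable Y)
    (μ : G → Measure F)
    (hprob : ∀ y, IsProbabilityMeasure (μ y))
    (hmeas : ∀ U : Set F, MeasurableSet U →
      AEMeasurable (fun y => (μ y U).toReal) (P.map Y))
    (hcond : ∀ U : Set F, MeasurableSet U →
      (fun ω => (μ (Y ω) U).toReal) =ᵐ[P]
        P[fun ω => Set.indicator U (fun _ => (1 : ℝ)) (X ω)|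
          MeasurableSpace.comap Y inferInstance])
    (ν : Measure F) (hdom : ∀ y, μ y ≪ ν) :
    ∀ ε : ℝ, 0 < ε → ∃ K : Set G, IsCompact K ∧ P.map Y Kᶜ < ENNReal.ofReal ε ∧
      (∀ f : BoundedContinuousFunction F ℝ,
        ContinuousOn (fun y => ∫ x, f x ∂(μ y)) K) ∧
      ∀ U : Set F, MeasurableSet U → (∀ y ∈ K, μ y (frontier U) = 0) →
        ContinuousOn (fun y => (μ y U).toReal) K := by
  intro ε hε
  let B := TopologicalSpace.countableBasis F
  have hBc : B.Countable := TopologicalSpace.countable_countableBasis F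
  -- the countable π-system of finite intersections of basic open sets
  let S : Set (Set F) := (fun t : Set (Set F) => ⋂₀ t) '' {t | t.Finite ∧ t ⊆ B}
  have hSc : S.Countable := (Set.countable_setOf_finite_subset hBc).image _
  have : Countable S := hSc.to_subtype
  have hSo : ∀ s ∈ S, IsOpen s := by
    rintro _ ⟨t, ⟨htf, htB⟩, rfl⟩
    exact htf.isOpen_sInter fun s hs => TopologicalSpace.isOpen_of_mem_countableBasis (htB hs)
  have hSpi : IsPiSystem S := by
    rintro _ ⟨t, ⟨htf, htB⟩, rfl⟩ _ ⟨u, ⟨huf, huB⟩, rfl⟩ _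
    exact ⟨t ∪ u, ⟨htf.union huf, Set.union_subset htB huB⟩, Set.sInter_union t u⟩
  have : IsProbabilityMeasure (P.map Y) := Measure.isProbabilityMeasure_map hY.aemeasurable
  obtain ⟨K, hKc, hKm, hK⟩ := lusin_aux (P.map Y) (fun y (s : S) => (μ y s).toReal)
    (aemeasurable_pi_lambda _ fun s => hmeas s (hSo s s.2).measurableSet)
    (ENNReal.ofReal ε) (by simpa using hε)
  let p : G → ProbabilityMeasure F := fun y => ⟨μ y, hprob y⟩
  have hp : ContinuousOn p K := by
    intro y hy
    refine hSpi.tendsto_probabilityMeasure_of_tendsto_of_mem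
      (fun s hs => (hSo s hs).measurableSet) ?_ ?_
    · intro u hu x hx
      obtain ⟨s, hsB, hxs, hsu⟩ :=
        (TopologicalSpace.isBasis_countableBasis F).exists_subset_of_mem_open hx hu
      have hsS : s ∈ S := ⟨{s}, ⟨Set.finite_singleton s, by simpa using hsB⟩, by simp⟩
      exact ⟨s, hsS, (hSo s hsS).mem_nhds hxs, hsu⟩
    · intro s hs
      have h := (continuousOn_pi.1 hK ⟨s, hs⟩) y hy
      exact NNReal.tendsto_coe.1 h
  refine ⟨K, hKc, hKm, fun f y hy => ?_, fun U _ hU y hy => ?_⟩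
  · exact ProbabilityMeasure.tendsto_iff_forall_integral_tendsto.1 (hp y hy) f
  · have h := ProbabilityMeasure.tendsto_measure_of_null_frontier_of_tendsto' (hp y hy)
      (E := U) (hU y hy)
    have := hprob y
    exact (ENNReal.tendsto_toReal (measure_ne_top (μ y) U)).comp h
end
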